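/- For every integer d ≥ 5 with d ≠ 6, the surface R_d : x^{d−1}y + xy^{d−1} + z^{d−1}t + zt^{d−1} = 0 in ℙ³ contains exactly 3d² − 4d lines; for d = 6 it contains exactly 180 lines. -/

import Mathlib

/-!
Write the equation of the surface as `f(x, y) + f(z, t) = 0` with the binary form
`f = x ^ (d - 1) * y + x * y ^ (d - 1)`, which has `d` distinct zeros on ℙ¹. A line on the surface that
meets `x = y = 0` is the join of a zero of `f` on `z = t = 0` with a zero of `f` on `x = y = 0`
(`exists_lineOf`), and there are `d ^ 2` such joins. Every other line is the graph of a linear map `A`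
of ℂ² with `f ∘ A = -f`, and `A` is invertible since `f` has no repeated factor (`det_ne_zero`).

To find all `A`, use that the differential operators with constant coefficients that kill `f` are
carried to each other by `A`. For `d ≥ 7` the operators of order four that kill `f` are the multiples
of `∂x² ∂y²`, so `A` is diagonal or antidiagonal; for `d = 5` the same follows from the operator
`∂x³ - ∂y³` (`monomial_of_ne`). Each of the two shapes contributes `d * (d - 2)` maps, whence
`d ^ 2 + 2 * d * (d - 2)` lines. For `d = 6` the operator `∂x⁴ - ∂y⁴` kills `f` as well, and the two
resulting systems of equations leave `96` further maps (`monomial_or_special`, `selfMaps_five`),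
so that there are `36 + 48 + 96 = 180` lines.
-/

open MvPolynomial

/-- A line in ℙ³: a 2-dimensional linear subspace of ℂ⁴. -/
def IsLine (W : Submodule ℂ (Fin 4 → ℂ)) : Prop :=
  Module.finrank ℂ W = 2

/-- The line `W` lies on the surface `F = 0`. -/
def LiesOn (F : MvPolynomial (Fin 4) ℂ) (W : Submodule ℂ (Fin 4 → ℂ)) : Prop :=
  ∀ v ∈ W, eval v F = 0

/-- The polynomial `x^{d-1}y + xy^{d-1} + z^{d-1}t + zt^{d-1}` defining the surface `R_d`. -/
noncomputable def ramsPoly (d : ℕ) : MvPolynomial (Fin 4) ℂ :=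
  X 0 ^ (d - 1) * X 1 + X 0 * X 1 ^ (d - 1) + X 2 ^ (d - 1) * X 3 + X 2 * X 3 ^ (d - 1)

/-! ### The binary form and its restriction to lines -/

/-- The binary form `x ^ m * y + x * y ^ m` of degree `m + 1`; the surface `R_d` is the sum of two
copies of it with `m = d - 1`, in the variables `x, y` and `z, t`. -/
def binForm (m : ℕ) (x y : ℂ) : ℂ := x ^ m * y + x * y ^ m

theorem ncard_pow_eq (n : ℕ) (hn : 0 < n) (c : ℂ) (hc : c ≠ 0) :
    {z : ℂ | z ^ n = c}.ncard = n := by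
  classical
  have hp := Complex.isPrimitiveRoot_exp n hn.ne'
  have h : {z : ℂ | z ^ n = c} = ((Polynomial.nthRoots n c).toFinset : Set ℂ) := by
    ext z; simp [Polynomial.mem_nthRoots hn]
  rw [h, Set.ncard_coe_finset, Multiset.toFinset_card_of_nodup (hp.nthRoots_nodup hc),
    hp.card_nthRoots, if_pos (IsAlgClosed.exists_pow_nat_eq c hn)]

theorem two_pow_ne {k : ℕ} (hk : 1 < k) : (2 : ℂ) ^ k ≠ 2 := by
  intro h
  have h' : (2 : ℕ) ^ k = 2 ^ 1 := by exact_mod_cast h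
  have := Nat.pow_right_injective le_rfl h'
  omega

/-- The form has no repeated linear factor. Hence it cannot be constant along an affine line whose
direction is one of its zeros, unless that line passes through the origin. -/
theorem parallel_of_const {m : ℕ} (hm : 2 ≤ m) {p q x y c : ℂ}
    (hpq : p ≠ 0 ∨ q ≠ 0) (h0 : binForm m p q = 0)
    (h : ∀ r : ℂ, binForm m (x + r * p) (y + r * q) = c) : x * q = y * p := by
  have h2 := two_pow_ne (k := m) (by omega)
  obtain ⟨n, rfl⟩ : ∃ n, m = n + 2 := ⟨m - 2, by omega⟩
  by_cases hp : p = 0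
  · subst hp
    have hq : q ≠ 0 := by simpa using hpq
    have key : ∀ t : ℂ, binForm (n + 2) x t = c := fun t => by
      have := h ((t - y) / q)
      rwa [mul_zero, add_zero, div_mul_cancel₀ _ hq, add_sub_cancel] at this
    have e0 := key 0
    have e1 := key 1
    have e2 := key 2
    simp only [binForm] at e0 e1 e2
    have : x * ((2 : ℂ) ^ (n + 2) - 2) = 0 := by
      rw [zero_pow (by omega)] at e0
      rw [one_pow] at e1
      linear_combination e2 - 2 * e1 + e0
    rcases mul_eq_zero.1 this with h | h
    · simp [h]
    · exact absurd (sub_eq_zero.1 h) h2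
  by_cases hq : q = 0
  · subst hq
    have key : ∀ t : ℂ, binForm (n + 2) t y = c := fun t => by
      have := h ((t - x) / p)
      rwa [mul_zero, add_zero, div_mul_cancel₀ _ hp, add_sub_cancel] at this
    have e0 := key 0
    have e1 := key 1
    have e2 := key 2
    simp only [binForm] at e0 e1 e2
    have : y * ((2 : ℂ) ^ (n + 2) - 2) = 0 := by
      rw [zero_pow (by omega)] at e0
      rw [one_pow] at e1
      linear_combination e2 - 2 * e1 + e0
    rcases mul_eq_zero.1 this with h | h
    · simp [h]
    · exact absurd (sub_eq_zero.1 h) h2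
  have hpn : p ^ (n + 1) = -q ^ (n + 1) := by
    have : p * q * (p ^ (n + 1) + q ^ (n + 1)) = 0 := by
      simp only [binForm] at h0; linear_combination h0
    have := (mul_eq_zero.1 this).resolve_left (mul_ne_zero hp hq)
    linear_combination this
  -- Here `p ^ (n + 1) = -q ^ (n + 1)`. The affine line, reparametrised so that its first coordinate
  -- vanishes at `s = 0`, is `s ↦ (z * p * s, z * q * (1 + s))`, and it passes through the origin iff
  -- `z = 0`. Comparing the values of the form at `s = 0` and `s = 1` forces this.
  set z := y / q - x / p with hz
  have key : ∀ s : ℂ, binForm (n + 2) (z * p * s) (z * q * (1 + s)) = c := fun s => by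
    have := h (z * s - x / p)
    convert this using 2
    · field_simp; ring
    · rw [hz]; field_simp; ring
  clear_value z
  have e0 := key 0
  have e1 := key 1
  simp only [binForm] at e0 e1
  have : z ^ (n + 3) * p * q * q ^ (n + 1) * (2 * (2 ^ (n + 1) - 1)) = 0 := by
    rw [mul_zero, zero_pow (by omega)] at e0
    have e : (z * p * 1) ^ (n + 2) = z ^ (n + 2) * p * -q ^ (n + 1) := by
      rw [← hpn]; ring
    rw [e] at e1
    linear_combination e1 - e0
  have h3 : (2 : ℂ) * (2 ^ (n + 1) - 1) ≠ 0 := by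
    intro h; apply h2; linear_combination h
  have hz0 : z = 0 := by
    simpa [hp, hq, h3] using this
  rw [hz, sub_eq_zero, div_eq_div_iff hq hp] at hz0
  exact hz0.symm


/-! ### Linear maps sending the form to its negative -/

theorem pderiv_num (i : Fin 2) (n : ℕ) [n.AtLeastTwo] :
    pderiv i (ofNat(n) : MvPolynomial (Fin 2) ℂ) = 0 :=
  (pderiv i).map_natCast n

/-- The polynomial version of the identity `f ∘ A = -f`, where `f = binForm m` and `A` has rows
`(a, b)` and `(c, e)`. It is expressed through the two linear forms `U`, `V` that are the coordinates
of `A`, keeping only their partial derivatives and the fact that `(U, V)` takes all values. -/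
theorem exists_linear_forms {m : ℕ} {a b c e : ℂ}
    (h : ∀ x y, binForm m (a * x + b * y) (c * x + e * y) + binForm m x y = 0) :
    ∃ U V : MvPolynomial (Fin 2) ℂ,
      U ^ m * V + U * V ^ m = -(X 0 ^ m * X 1 + X 0 * X 1 ^ m) ∧
      pderiv 0 U = C a ∧ pderiv 1 U = C b ∧ pderiv 0 V = C c ∧ pderiv 1 V = C e ∧
      (a * e - b * c ≠ 0 → ∀ ξ η : ℂ, ∃ v, eval v U = ξ ∧ eval v V = η) := by
  refine ⟨C a * X 0 + C b * X 1, C c * X 0 + C e * X 1, ?_, by simp, by simp, by simp, by simp,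
    fun hdet ξ η => ⟨![(e * ξ - b * η) / (a * e - b * c), (a * η - c * ξ) / (a * e - b * c)],
      ?_, ?_⟩⟩
  · apply MvPolynomial.funext
    intro v
    have := h (v 0) (v 1)
    simp only [binForm] at this
    simp
    linear_combination this
  · simp
    rw [← mul_div_assoc, ← mul_div_assoc, ← add_div, div_eq_iff hdet]
    ring
  · simp
    rw [← mul_div_assoc, ← mul_div_assoc, ← add_div, div_eq_iff hdet]
    ring

/-- Since `∂₀² ∂₁²` kills `f = binForm (k + 4)`, the identity `f ∘ A = -f` and the chain rule give
`D_u² D_v² f = 0`, where `u`, `v` are the columns of `A`; this is that equation at `(ξ, η)`, divided by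
`(k + 4) * (k + 3) * (k + 2)`. -/
theorem deriv_four {k : ℕ} {a b c e : ℂ} (hdet : a * e - b * c ≠ 0)
    (h : ∀ x y, binForm (k + 4) (a * x + b * y) (c * x + e * y) + binForm (k + 4) x y = 0)
    (ξ η : ℂ) :
    (k + 1) * (a ^ 2 * b ^ 2 * ξ ^ k * η + c ^ 2 * e ^ 2 * ξ * η ^ k)
      + 2 * (a * b * ξ ^ (k + 1) + c * e * η ^ (k + 1)) * (a * e + b * c) = 0 := by
  obtain ⟨U, V, hF, U0, U1, V0, V1, hs⟩ := exists_linear_forms h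
  have hD := congrArg (fun P => pderiv 0 (pderiv 0 (pderiv 1 (pderiv 1 P)))) hF
  simp [Derivation.leibniz, Derivation.leibniz_pow, U0, U1, V0, V1, pderiv_num] at hD
  obtain ⟨v, rfl, rfl⟩ := hs hdet ξ η
  have hE := congrArg (eval v) hD
  simp at hE
  have hk : ((k : ℂ) + 4) * (k + 3) * (k + 2) ≠ 0 := by
    norm_cast
  refine (mul_eq_zero.1 (?_ : ((k : ℂ) + 4) * (k + 3) * (k + 2) * _ = 0)).resolve_left hk
  linear_combination hE

/-- The analogue of `deriv_four` for the operator `∂₀⁴ - ∂₁⁴`, which also kills `binForm 5`. -/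
theorem deriv_four_sub {a b c e : ℂ} (hdet : a * e - b * c ≠ 0)
    (h : ∀ x y, binForm 5 (a * x + b * y) (c * x + e * y) + binForm 5 x y = 0)
    (ξ η : ℂ) :
    (a ^ 4 - b ^ 4 + c ^ 4 - e ^ 4) * (ξ * η) + 2 * (a ^ 3 * c - b ^ 3 * e) * ξ ^ 2
      + 2 * (a * c ^ 3 - b * e ^ 3) * η ^ 2 = 0 := by
  obtain ⟨U, V, hF, U0, U1, V0, V1, hs⟩ := exists_linear_forms h
  have hD := congrArg (fun P => pderiv 0 (pderiv 0 (pderiv 0 (pderiv 0 P))) -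
    pderiv 1 (pderiv 1 (pderiv 1 (pderiv 1 P)))) hF
  simp [Derivation.leibniz, Derivation.leibniz_pow, U0, U1, V0, V1, pderiv_num] at hD
  obtain ⟨v, rfl, rfl⟩ := hs hdet ξ η
  have hE := congrArg (eval v) hD
  simp at hE
  linear_combination hE / 120

/-- The analogue of `deriv_four` for the operator `∂₀³ - ∂₁³`, which kills `binForm 4`. -/
theorem deriv_three_sub {a b c e : ℂ} (hdet : a * e - b * c ≠ 0)
    (h : ∀ x y, binForm 4 (a * x + b * y) (c * x + e * y) + binForm 4 x y = 0)
    (ξ η : ℂ) :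
    2 * (a ^ 3 - b ^ 3 + c ^ 3 - e ^ 3) * (ξ * η) + 3 * (a ^ 2 * c - b ^ 2 * e) * ξ ^ 2
      + 3 * (a * c ^ 2 - b * e ^ 2) * η ^ 2 = 0 := by
  obtain ⟨U, V, hF, U0, U1, V0, V1, hs⟩ := exists_linear_forms h
  have hD := congrArg (fun P => pderiv 0 (pderiv 0 (pderiv 0 P)) -
    pderiv 1 (pderiv 1 (pderiv 1 P))) hF
  simp [Derivation.leibniz, Derivation.leibniz_pow, U0, U1, V0, V1, pderiv_num] at hD
  obtain ⟨v, rfl, rfl⟩ := hs hdet ξ η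
  have hE := congrArg (eval v) hD
  simp at hE
  linear_combination hE / 12

/-- If `A` had a kernel vector `(p, q)`, the form would be invariant under all translations by its
multiples, which contradicts `parallel_of_const`. -/
theorem det_ne_zero {m : ℕ} (hm : 2 ≤ m) {a b c e : ℂ}
    (h : ∀ x y, binForm m (a * x + b * y) (c * x + e * y) + binForm m x y = 0) :
    a * e - b * c ≠ 0 := by
  intro hdet
  have h00 : binForm m 0 0 = 0 := by simp [binForm]
  have key : ∀ p q : ℂ, a * p + b * q = 0 → c * p + e * q = 0 → p = 0 ∧ q = 0 := by
    intro p q h1 h2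
    by_contra hpq
    have hpq' : p ≠ 0 ∨ q ≠ 0 := by tauto
    have h0 : binForm m p q = 0 := by
      have := h p q
      rwa [h1, h2, h00, zero_add] at this
    have hp : ∀ x y : ℂ, x * q = y * p := fun x y =>
      parallel_of_const hm hpq' h0 (c := binForm m x y) fun r => by
        have e1 := h (x + r * p) (y + r * q)
        have e2 := h x y
        rw [show a * (x + r * p) + b * (y + r * q) = a * x + b * y by
          linear_combination r * h1, show c * (x + r * p) + e * (y + r * q) = c * x + e * y by
          linear_combination r * h2] at e1
        linear_combination e1 - e2
    have e1 := hp 1 0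
    have e2 := hp 0 1
    simp at e1 e2
    exact hpq ⟨e2.symm, e1⟩
  obtain ⟨hb, ha⟩ := key b (-a) (by ring) (by linear_combination -hdet)
  obtain ⟨he, hc⟩ := key e (-c) (by linear_combination hdet) (by ring)
  simp at ha hc
  subst ha hb hc he
  simpa using key 1 0 (by simp) (by simp)

/-- Except in degree `6`, a linear map that sends the form to its negative preserves the pair of
points `0`, `∞` of ℙ¹. -/
theorem monomial_of_ne {m : ℕ} (hm : 4 ≤ m) (hm5 : m ≠ 5) {a b c e : ℂ}
    (h : ∀ x y, binForm m (a * x + b * y) (c * x + e * y) + binForm m x y = 0) :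
    (b = 0 ∧ c = 0) ∨ (a = 0 ∧ e = 0) := by
  have hdet := det_ne_zero (by omega) h
  suffices hs : a * b = 0 ∧ c * e = 0 by
    obtain ⟨h1, h2⟩ := hs
    rcases mul_eq_zero.1 h1 with rfl | rfl <;> rcases mul_eq_zero.1 h2 with rfl | rfl <;>
      simp at hdet ⊢
  rcases Nat.eq_or_lt_of_le hm with rfl | hm
  · have hD := deriv_three_sub hdet h
    have e1 := hD 1 0
    have e2 := hD 0 1
    simp only [mul_zero, mul_one, add_zero, zero_add, one_pow, ne_eq,
      OfNat.ofNat_ne_zero, not_false_eq_true, zero_pow] at e1 e2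
    have hac : a * c = 0 := by
      refine (mul_eq_zero.1 (?_ : a * c * (a * e - b * c) = 0)).resolve_right hdet
      linear_combination (e * e1 - b * e2) / 3
    have hbe : b * e = 0 := by
      refine (mul_eq_zero.1 (?_ : b * e * (a * e - b * c) = 0)).resolve_right hdet
      linear_combination (c * e1 - a * e2) / 3
    constructor
    · refine (mul_eq_zero.1 (?_ : a * b * (a * e - b * c) = 0)).resolve_right hdet
      linear_combination a ^ 2 * hbe - b ^ 2 * hac
    · refine (mul_eq_zero.1 (?_ : c * e * (a * e - b * c) = 0)).resolve_right hdet
      linear_combination e ^ 2 * hac - c ^ 2 * hbe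
  · obtain ⟨k, rfl⟩ : ∃ k, m = k + 4 := ⟨m - 4, by omega⟩
    have hk : 1 < k := by omega
    have hk0 : k ≠ 0 := by omega
    have hD := deriv_four hdet h
    have e1 := hD 1 0
    have e2 := hD 0 1
    have e3 := hD 1 1
    have e4 := hD 1 2
    simp only [one_pow, zero_pow hk0, zero_pow k.succ_ne_zero] at e1 e2 e3 e4
    have hce : (c * e) ^ 2 = 0 := by
      refine (mul_eq_zero.1 (?_ : ((k : ℂ) + 1) * (2 ^ k - 2) * (c * e) ^ 2 = 0)).resolve_left
        (mul_ne_zero (by norm_cast) (sub_ne_zero.2 (two_pow_ne hk)))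
      linear_combination e4 - 2 * e3 + e1 + (2 - 2 ^ (k + 1)) * e2
    have hab : (a * b) ^ 2 = 0 := by
      refine (mul_eq_zero.1 (?_ : ((k : ℂ) + 1) * (a * b) ^ 2 = 0)).resolve_left (by norm_cast)
      linear_combination e3 - e1 - e2 - ((k : ℂ) + 1) * hce
    exact ⟨pow_eq_zero_iff two_ne_zero |>.1 hab, pow_eq_zero_iff two_ne_zero |>.1 hce⟩

/-- In degree `6` the zeros of the form are the vertices of a regular octahedron, and there are more
maps than the monomial ones. -/
theorem monomial_or_special {a b c e : ℂ}
    (h : ∀ x y, binForm 5 (a * x + b * y) (c * x + e * y) + binForm 5 x y = 0) :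
    (b = 0 ∧ c = 0) ∨ (a = 0 ∧ e = 0) ∨
     (a ^ 24 = 1 / 4096 ∧ ∃ g : ℂ, g ^ 4 = -1 ∧ c = a * g ∧ 8 * a ^ 5 * e = 1 ∧ b * g = -e) := by
  have hdet := det_ne_zero (by omega) h
  have hD := deriv_four (k := 1) hdet h
  have d1 := hD 1 0
  have d2 := hD 0 1
  have d3 := hD 1 1
  have s1 := deriv_four_sub hdet h 1 0
  simp only [one_pow, Nat.cast_one] at d1 d2 d3 s1
  by_cases hs : a * e + b * c = 0
  · have hae : a * e ≠ 0 := fun h0 => hdet (by linear_combination 2 * h0 - hs)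
    have hbc : b * c ≠ 0 := fun h0 => hdet (by linear_combination hs - 2 * h0)
    obtain ⟨ha, he⟩ := mul_ne_zero_iff.1 hae
    obtain ⟨g, rfl⟩ : ∃ g, c = a * g := ⟨c / a, by field_simp⟩
    have hbg : b * g = -e := by
      have : a * (b * g + e) = 0 := by linear_combination hs
      linear_combination (mul_eq_zero.1 this).resolve_left ha
    have hb : b ≠ 0 := left_ne_zero_of_mul hbc
    have hg0 : g ≠ 0 := right_ne_zero_of_mul (right_ne_zero_of_mul hbc)
    obtain rfl : e = -(b * g) := by rw [hbg, neg_neg]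
    have hg : g ^ 4 = -1 := by
      have : a ^ 2 * b ^ 2 * (g ^ 4 + 1) = 0 := by
        linear_combination (d3 - d1 - d2) / 2
      have := (mul_eq_zero.1 this).resolve_left (by positivity)
      linear_combination this
    have hb4 : b ^ 4 = -a ^ 4 := by
      have : g * (b ^ 4 + a ^ 4) = 0 := by linear_combination s1 / 2
      linear_combination (mul_eq_zero.1 this).resolve_left hg0
    -- Evaluation at `(1, 1)` fixes the scale of `A`.
    have h11 := h 1 1
    simp only [binForm] at h11
    have hnorm : 8 * a ^ 5 * -(b * g) = 1 := by
      linear_combination (-1 / 2) * h11 + (1 / 2) * (a + b) * (a - b) ^ 5 * g * hg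
        - 4 * a * b * g * hb4
    refine Or.inr (Or.inr ⟨?_, g, hg, rfl, hnorm, by ring⟩)
    have h4 : (8 * a ^ 5 * -(b * g)) ^ 4 = 1 := by rw [hnorm, one_pow]
    linear_combination (1 / 4096) * h4 - a ^ 20 * b ^ 4 * hg + a ^ 20 * hb4
  · have hab : a * b = 0 := by
      refine (mul_eq_zero.1 (?_ : a * b * (a * e + b * c) = 0)).resolve_right hs
      linear_combination d1 / 2
    have hce : c * e = 0 := by
      refine (mul_eq_zero.1 (?_ : c * e * (a * e + b * c) = 0)).resolve_right hs
      linear_combination d2 / 2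
    rcases mul_eq_zero.1 hab with rfl | rfl <;> rcases mul_eq_zero.1 hce with rfl | rfl <;>
      simp at hdet ⊢

/-- The linear maps `A` of ℂ² with `f ∘ A = -f` for `f = binForm m`; the tuple `(a, b, c, e)` stands
for the matrix with rows `(a, b)` and `(c, e)`. -/
def selfMaps (m : ℕ) : Set (ℂ × ℂ × ℂ × ℂ) :=
  {A | ∀ x y, binForm m (A.1 * x + A.2.1 * y) (A.2.2.1 * x + A.2.2.2 * y) + binForm m x y = 0}

/-- The pairs `(p, q)` for which the form is sent to its negative by `(x, y) ↦ (p * x, q * y)`, or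
equivalently by `(x, y) ↦ (p * y, q * x)`. -/
def scalings (m : ℕ) : Set (ℂ × ℂ) := {p | p.1 ^ m * p.2 = -1 ∧ p.1 * p.2 ^ m = -1}

/-- The diagonal and antidiagonal matrices in `selfMaps m`. -/
def monomialMaps (m : ℕ) : Set (ℂ × ℂ × ℂ × ℂ) :=
  (fun p : ℂ × ℂ => (p.1, 0, 0, p.2)) '' scalings m ∪
    (fun p : ℂ × ℂ => (0, p.1, p.2, 0)) '' scalings m

/-- The first equation determines `q` as `-(p ^ m)⁻¹`, and the second one then becomes
`p ^ (m ^ 2 - 1) = (-1) ^ (m + 1)`. -/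
theorem ncard_scalings (m : ℕ) (hm : 2 ≤ m) : (scalings m).ncard = m ^ 2 - 1 := by
  have h1 : 1 < m ^ 2 := Nat.one_lt_pow two_ne_zero (by omega)
  have hS : scalings m = (fun a : ℂ => (a, -(a ^ m)⁻¹)) '' {a | a ^ (m ^ 2 - 1) = (-1) ^ (m + 1)} := by
    ext ⟨a, e⟩
    simp only [scalings, Set.mem_ofPred_eq, Set.mem_image, Prod.mk.injEq]
    have aux : a ≠ 0 → (a * (-(a ^ m)⁻¹) ^ m = -1 ↔ a ^ (m ^ 2 - 1) = (-1) ^ (m + 1)) := by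
      intro ha
      have hp : a ^ (m ^ 2) = a ^ (m ^ 2 - 1) * a := by
        rw [← pow_succ]; congr 1; omega
      have hs : ((-1 : ℂ) ^ m) * (-1) ^ m = 1 := by rw [← mul_pow]; simp
      rw [neg_pow, inv_pow, ← pow_mul, ← sq, ← div_eq_mul_inv ((-1 : ℂ) ^ m), ← mul_div_assoc,
        div_eq_iff (pow_ne_zero _ ha), hp, pow_succ (-1 : ℂ) m]
      constructor
      · intro h
        apply mul_right_cancel₀ ha
        linear_combination h
      · intro h
        rw [h]; ring
    constructor
    · rintro ⟨h1, h2⟩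
      have ha : a ≠ 0 := by rintro rfl; simp at h2
      obtain rfl : e = -(a ^ m)⁻¹ := by
        have := pow_ne_zero m ha
        field_simp
        linear_combination h1
      exact ⟨a, (aux ha).1 h2, rfl, rfl⟩
    · rintro ⟨a', h1, rfl, rfl⟩
      have ha : a' ≠ 0 := by
        rintro rfl
        rw [zero_pow (by omega)] at h1
        exact pow_ne_zero (m + 1) (by simp : (-1 : ℂ) ≠ 0) h1.symm
      exact ⟨by have := pow_ne_zero m ha; field_simp, (aux ha).2 h1⟩
  rw [hS, Set.ncard_image_of_injective _ fun a b h => congrArg Prod.fst h,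
    ncard_pow_eq _ (by omega) _ (pow_ne_zero _ (by simp))]

theorem finite_scalings (m : ℕ) (hm : 2 ≤ m) : (scalings m).Finite := by
  have h1 : 1 < m ^ 2 := Nat.one_lt_pow two_ne_zero (by omega)
  exact Set.finite_of_ncard_ne_zero (by rw [ncard_scalings m hm]; omega)

theorem finite_monomialMaps (m : ℕ) (hm : 2 ≤ m) : (monomialMaps m).Finite :=
  ((finite_scalings m hm).image _).union ((finite_scalings m hm).image _)

theorem ncard_monomialMaps (m : ℕ) (hm : 2 ≤ m) : (monomialMaps m).ncard = 2 * (m ^ 2 - 1) := by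
  have hf := finite_scalings m hm
  rw [monomialMaps, Set.ncard_union_eq ?_ (hf.image _) (hf.image _),
    Set.ncard_image_of_injective, Set.ncard_image_of_injective, ncard_scalings m hm, two_mul]
  · rintro ⟨a, b⟩ ⟨c, d⟩ h
    simpa using h
  · rintro ⟨a, b⟩ ⟨c, d⟩ h
    simpa using h
  · rw [Set.disjoint_left]
    rintro _ ⟨⟨a, b⟩, h, rfl⟩ ⟨⟨a', b'⟩, h', h2⟩
    simp only [Prod.mk.injEq] at h2
    obtain ⟨rfl, rfl, rfl, rfl⟩ := h2
    have := h.2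
    simp at this

theorem coeffs_eq_zero {m : ℕ} (hm : 2 ≤ m) {α β : ℂ}
    (h : ∀ x y : ℂ, α * (x ^ m * y) + β * (x * y ^ m) = 0) : α = 0 ∧ β = 0 := by
  have h1 := h 1 1
  have h2 := h 2 1
  simp only [one_pow] at h1 h2
  have hα : α = 0 := by
    refine (mul_eq_zero.1 (?_ : α * (2 ^ m - 2) = 0)).resolve_right
      (sub_ne_zero.2 (two_pow_ne (by omega)))
    linear_combination h2 - 2 * h1
  refine ⟨hα, by linear_combination h1 - hα⟩

theorem mem_monomialMaps {m : ℕ} (hm : 2 ≤ m) {a b c e : ℂ} :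
    (a, b, c, e) ∈ monomialMaps m ↔
      (a, b, c, e) ∈ selfMaps m ∧ ((b = 0 ∧ c = 0) ∨ (a = 0 ∧ e = 0)) := by
  constructor
  · rintro (⟨⟨p, q⟩, ⟨h1, h2⟩, h⟩ | ⟨⟨p, q⟩, ⟨h1, h2⟩, h⟩)
    all_goals
      simp only [Prod.mk.injEq] at h
      obtain ⟨rfl, rfl, rfl, rfl⟩ := h
      refine ⟨fun x y => ?_, by simp⟩
      simp only [binForm] at h1 h2 ⊢
    · linear_combination x ^ m * y * h1 + x * y ^ m * h2
    · linear_combination x ^ m * y * h2 + x * y ^ m * h1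
  · rintro ⟨h, ⟨rfl, rfl⟩ | ⟨rfl, rfl⟩⟩
    · left
      obtain ⟨h1, h2⟩ := coeffs_eq_zero hm (α := a ^ m * e + 1) (β := a * e ^ m + 1) fun x y => by
        have := h x y
        simp only [binForm] at this
        linear_combination this
      exact ⟨(a, e), ⟨by linear_combination h1, by linear_combination h2⟩, rfl⟩
    · right
      obtain ⟨h1, h2⟩ := coeffs_eq_zero hm (α := b * c ^ m + 1) (β := b ^ m * c + 1) fun x y => by
        have := h x y
        simp only [binForm] at this
        linear_combination this
      exact ⟨(b, c), ⟨by linear_combination h2, by linear_combination h1⟩, rfl⟩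

theorem ncard_selfMaps {m : ℕ} (hm : 4 ≤ m) (hm5 : m ≠ 5) :
    (selfMaps m).ncard = 2 * (m ^ 2 - 1) := by
  have h : selfMaps m = monomialMaps m := by
    ext ⟨a, b, c, e⟩
    rw [mem_monomialMaps (by omega)]
    exact ⟨fun h => ⟨h, monomial_of_ne hm hm5 h⟩, And.left⟩
  rw [h, ncard_monomialMaps m (by omega)]

/-- The matrices in `selfMaps 5` that are neither diagonal nor antidiagonal, parametrised by the
upper left entry `a` and the ratio `g` of the two entries of the first column. -/
def specialMaps : Set (ℂ × ℂ × ℂ × ℂ) :=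
  (fun p : ℂ × ℂ => (p.1, -(8 * p.1 ^ 5 * p.2)⁻¹, p.1 * p.2, (8 * p.1 ^ 5)⁻¹)) ''
    ({a | a ^ 24 = 1 / 4096} ×ˢ {g | g ^ 4 = -1})

theorem selfMaps_five : selfMaps 5 = monomialMaps 5 ∪ specialMaps := by
  ext ⟨a, b, c, e⟩
  rw [Set.mem_union, mem_monomialMaps (by omega)]
  constructor
  · intro h
    rcases monomial_or_special (a := a) (b := b) (c := c) (e := e) h with h' | h' | ⟨ha, g, hg, rfl, he, hb⟩
    · exact Or.inl ⟨h, Or.inl h'⟩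
    · exact Or.inl ⟨h, Or.inr h'⟩
    · refine Or.inr ⟨(a, g), ⟨ha, hg⟩, ?_⟩
      have ha0 : a ≠ 0 := by rintro rfl; norm_num at ha
      have hg0 : g ≠ 0 := by rintro rfl; norm_num at hg
      simp only [Prod.mk.injEq, true_and]
      constructor
      · field_simp
        linear_combination he - 8 * a ^ 5 * hb
      · field_simp
        linear_combination -he
  · rintro (h | ⟨⟨a', g⟩, ⟨ha, hg⟩, h⟩)
    · exact h.1
    · simp only [Prod.mk.injEq] at h
      obtain ⟨rfl, rfl, rfl, rfl⟩ := h
      simp only [Set.mem_ofPred_eq] at ha hg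
      have ha0 : a' ≠ 0 := by rintro rfl; norm_num at ha
      have hg0 : g ≠ 0 := by rintro rfl; norm_num at hg
      have he1 : 8 * a' ^ 5 * (8 * a' ^ 5)⁻¹ = 1 := mul_inv_cancel₀ (by simp [ha0])
      have hb1 : -(8 * a' ^ 5 * g)⁻¹ * g = -(8 * a' ^ 5)⁻¹ := by field_simp
      intro x y
      simp only [binForm]
      generalize (8 * a' ^ 5)⁻¹ = e at *
      generalize -(8 * a' ^ 5 * g)⁻¹ = b at *
      obtain rfl : e = -(b * g) := by rw [hb1, neg_neg]
      have hb4 : b ^ 4 = -a' ^ 4 := by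
        have h4 : (8 * a' ^ 5 * -(b * g)) ^ 4 = 1 := by rw [he1, one_pow]
        have : a' ^ 20 * (b ^ 4 + a' ^ 4) = 0 := by
          linear_combination (-1 / 4096) * h4 + a' ^ 20 * b ^ 4 * hg + ha
        linear_combination (mul_eq_zero.1 this).resolve_left (by positivity)
      linear_combination (a' * x + b * y) * (a' * x - b * y) ^ 5 * g * hg
        - (x ^ 5 * y + x * y ^ 5) * he1 - 8 * a' * b * g * x * y ^ 5 * hb4

theorem ncard_selfMaps_five : (selfMaps 5).ncard = 144 := by
  have h1 := ncard_pow_eq 24 (by norm_num) (1 / 4096) (by norm_num)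
  have h2 := ncard_pow_eq 4 (by norm_num) (-1) (by norm_num)
  have hprod : ({a : ℂ | a ^ 24 = 1 / 4096} ×ˢ {g : ℂ | g ^ 4 = -1}).ncard = 96 := by
    rw [Set.ncard_prod, h1, h2]
  have hsp : specialMaps.ncard = 96 := by
    rw [specialMaps, Set.InjOn.ncard_image, hprod]
    rintro ⟨a, g⟩ ⟨ha, hg⟩ ⟨a', g'⟩ - h
    simp only [Prod.mk.injEq] at h
    obtain ⟨rfl, -, h3, -⟩ := h
    have ha0 : a ≠ 0 := by rintro rfl; norm_num at ha
    rw [mul_left_cancel₀ ha0 h3]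
  rw [selfMaps_five, Set.ncard_union_eq ?_ (finite_monomialMaps 5 (by norm_num))
    (Set.finite_of_ncard_ne_zero (by rw [hsp]; norm_num)), ncard_monomialMaps 5 (by norm_num), hsp]
  · norm_num
  rw [Set.disjoint_left]
  rintro _ h ⟨⟨a, g⟩, ⟨ha, hg⟩, rfl⟩
  simp only [Set.mem_ofPred_eq] at ha hg
  have ha0 : a ≠ 0 := by rintro rfl; norm_num at ha
  have hg0 : g ≠ 0 := by rintro rfl; norm_num at hg
  have := ((mem_monomialMaps (by norm_num)).1 h).2
  simp [ha0, hg0] at this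

/-! ### Zeros of the form on ℙ¹ -/

/-- The normalised representative `(1, q)` or `(0, 1)` of a point of ℙ¹, the index `none` being the
point at infinity. -/
def pt : Option ℂ → ℂ × ℂ
  | none => (0, 1)
  | some q => (1, q)

theorem pt_ne_zero (o : Option ℂ) : (pt o).1 ≠ 0 ∨ (pt o).2 ≠ 0 := by
  cases o <;> simp [pt]

theorem pt_eq_of_smul {o o' : Option ℂ} {s : ℂ} (h1 : s * (pt o').1 = (pt o).1)
    (h2 : s * (pt o').2 = (pt o).2) : o = o' := by
  rcases o with _ | q <;> rcases o' with _ | q' <;> simp [pt] at h1 h2 ⊢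
  · simp [h1] at h2
  · rw [← h2, h1, one_mul]

theorem exists_pt {x y : ℂ} (h : x ≠ 0 ∨ y ≠ 0) :
    ∃ o s, s * x = (pt o).1 ∧ s * y = (pt o).2 := by
  by_cases hx : x = 0
  · subst hx
    have hy : y ≠ 0 := by simpa using h
    exact ⟨none, y⁻¹, by simp [pt], by simp [pt, hy]⟩
  · exact ⟨some (y / x), x⁻¹, by simp [pt, hx], by simp [pt]; field_simp⟩

/-- The zeros in ℙ¹ of the binary form `x ^ m * y + x * y ^ m`. -/
def zeros (m : ℕ) : Set (Option ℂ) := {o | binForm m (pt o).1 (pt o).2 = 0}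

theorem ncard_zeros (m : ℕ) (hm : 2 ≤ m) : (zeros m).ncard = m + 1 := by
  obtain ⟨n, rfl⟩ : ∃ n, m = n + 2 := ⟨m - 2, by omega⟩
  have h : zeros (n + 2) = insert none (insert (some 0) (some '' {q : ℂ | q ^ (n + 1) = -1})) := by
    ext o
    rcases o with _ | q
    · simp [zeros, pt, binForm]
    · have : some q ∈ zeros (n + 2) ↔ q * (q ^ (n + 1) + 1) = 0 := by
        simp only [zeros, Set.mem_ofPred_eq, pt, binForm]
        rw [show (1 : ℂ) ^ (n + 2) * q + 1 * q ^ (n + 2) = q * (q ^ (n + 1) + 1) by ring]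
      rw [this]
      simp [add_eq_zero_iff_eq_neg]
  have hc := ncard_pow_eq (n + 1) (by omega) (-1) (by simp)
  have hf : {q : ℂ | q ^ (n + 1) = -1}.Finite := Set.finite_of_ncard_ne_zero (by omega)
  rw [h, Set.ncard_insert_of_notMem (by simp) ((hf.image _).insert _),
    Set.ncard_insert_of_notMem (by simp) (hf.image _),
    Set.ncard_image_of_injective _ (Option.some_injective _), hc]

theorem binForm_smul (m : ℕ) (s x y : ℂ) :
    binForm m (s * x) (s * y) = s ^ (m + 1) * binForm m x y := by
  simp only [binForm]; ring

/-! ### Lines of ℙ³ and their classification -/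

theorem liesOn_iff {d : ℕ} {W : Submodule ℂ (Fin 4 → ℂ)} :
    LiesOn (ramsPoly d) W ↔
      ∀ v ∈ W, binForm (d - 1) (v 0) (v 1) + binForm (d - 1) (v 2) (v 3) = 0 := by
  simp [LiesOn, ramsPoly, binForm, add_assoc]

theorem isLine_span_pair {u v : Fin 4 → ℂ} (h : LinearIndependent ℂ ![u, v]) :
    IsLine (Submodule.span ℂ {u, v}) := by
  have := finrank_span_eq_card h
  rwa [Matrix.range_cons_cons_empty, Fintype.card_fin] at this

theorem IsLine.eq_span_pair {W : Submodule ℂ (Fin 4 → ℂ)} (hW : IsLine W) {u v : Fin 4 → ℂ}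
    (hu : u ∈ W) (hv : v ∈ W) (h : LinearIndependent ℂ ![u, v]) :
    Submodule.span ℂ {u, v} = W :=
  Submodule.eq_of_le_of_finrank_eq (Submodule.span_le.2 (by simp [Set.insert_subset_iff, hu, hv]))
    ((isLine_span_pair h).trans hW.symm)

theorem linInd_prod (o o' : Option ℂ) :
    LinearIndependent ℂ ![![(pt o).1, (pt o).2, 0, 0], ![0, 0, (pt o').1, (pt o').2]] := by
  rw [LinearIndependent.pair_iff]
  intro s t h
  have e0 := congrFun h 0
  have e1 := congrFun h 1
  have e2 := congrFun h 2
  have e3 := congrFun h 3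
  simp at e0 e1 e2 e3
  have h1 := pt_ne_zero o
  have h2 := pt_ne_zero o'
  tauto

theorem linInd_graph (a b c e : ℂ) :
    LinearIndependent ℂ ![![1, 0, a, c], ![0, 1, b, e]] := by
  rw [LinearIndependent.pair_iff]
  intro s t h
  have e0 := congrFun h 0
  have e1 := congrFun h 1
  simp at e0 e1
  exact ⟨e0, e1⟩

/-- The two families of lines in ℂ² × ℂ²: `inl (o, o')` is the join of the point `o` of the line
`z = t = 0` with the point `o'` of the line `x = y = 0`, and `inr (a, b, c, e)` is the graph
`z = a * x + b * y`, `t = c * x + e * y`. -/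
noncomputable def lineOf : (Option ℂ × Option ℂ) ⊕ (ℂ × ℂ × ℂ × ℂ) → Submodule ℂ (Fin 4 → ℂ)
  | .inl (o, o') => Submodule.span ℂ {![(pt o).1, (pt o).2, 0, 0], ![0, 0, (pt o').1, (pt o').2]}
  | .inr (a, b, c, e) => Submodule.span ℂ {![1, 0, a, c], ![0, 1, b, e]}

theorem mem_lineOf_inl {o o' : Option ℂ} {v : Fin 4 → ℂ} :
    v ∈ lineOf (.inl (o, o')) ↔ ∃ s t : ℂ, s * (pt o).1 = v 0 ∧ s * (pt o).2 = v 1 ∧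
      t * (pt o').1 = v 2 ∧ t * (pt o').2 = v 3 := by
  simp [lineOf, Submodule.mem_span_pair, funext_iff, Fin.forall_fin_succ]

theorem mem_lineOf_inr {a b c e : ℂ} {v : Fin 4 → ℂ} :
    v ∈ lineOf (.inr (a, b, c, e)) ↔ v 2 = a * v 0 + b * v 1 ∧ v 3 = c * v 0 + e * v 1 := by
  simp [lineOf, Submodule.mem_span_pair, funext_iff, Fin.forall_fin_succ, mul_comm]
  constructor <;> rintro ⟨h1, h2⟩ <;> exact ⟨h1.symm, h2.symm⟩

theorem lineOf_injective : Function.Injective lineOf := by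
  have hne : ∀ o o' A, lineOf (.inl (o, o')) ≠ lineOf (.inr A) := by
    rintro o o' ⟨a, b, c, e⟩ h
    have h1 : ![0, 0, (pt o').1, (pt o').2] ∈ lineOf (.inl (o, o')) :=
      mem_lineOf_inl.2 ⟨0, 1, by simp⟩
    rw [h, mem_lineOf_inr] at h1
    simp at h1
    have := pt_ne_zero o'
    tauto
  rintro (⟨o₁, o₂⟩ | ⟨a, b, c, e⟩) (⟨p₁, p₂⟩ | ⟨a', b', c', e'⟩) h
  · have h1 : ![(pt o₁).1, (pt o₁).2, 0, 0] ∈ lineOf (.inl (o₁, o₂)) :=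
      mem_lineOf_inl.2 ⟨1, 0, by simp⟩
    have h2 : ![0, 0, (pt o₂).1, (pt o₂).2] ∈ lineOf (.inl (o₁, o₂)) :=
      mem_lineOf_inl.2 ⟨0, 1, by simp⟩
    rw [h, mem_lineOf_inl] at h1 h2
    obtain ⟨s, -, e1, e2, -⟩ := h1
    obtain ⟨-, t, -, -, e3, e4⟩ := h2
    rw [pt_eq_of_smul e1 e2, pt_eq_of_smul e3 e4]
  · exact absurd h (hne _ _ _)
  · exact absurd h.symm (hne _ _ _)
  · have h1 : ![1, 0, a, c] ∈ lineOf (.inr (a, b, c, e)) := mem_lineOf_inr.2 (by simp)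
    have h2 : ![0, 1, b, e] ∈ lineOf (.inr (a, b, c, e)) := mem_lineOf_inr.2 (by simp)
    rw [h, mem_lineOf_inr] at h1 h2
    simp at h1 h2
    simp [h1, h2]

theorem isLine_lineOf : ∀ i, IsLine (lineOf i)
  | .inl (o, o') => isLine_span_pair (linInd_prod o o')
  | .inr (a, b, c, e) => isLine_span_pair (linInd_graph a b c e)

theorem liesOn_lineOf_inl {d : ℕ} {o o' : Option ℂ} :
    LiesOn (ramsPoly d) (lineOf (.inl (o, o'))) ↔ o ∈ zeros (d - 1) ∧ o' ∈ zeros (d - 1) := by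
  rw [liesOn_iff]
  constructor
  · intro h
    have h1 := h ![(pt o).1, (pt o).2, 0, 0] (mem_lineOf_inl.2 ⟨1, 0, by simp⟩)
    have h2 := h ![0, 0, (pt o').1, (pt o').2] (mem_lineOf_inl.2 ⟨0, 1, by simp⟩)
    have h00 : binForm (d - 1) 0 0 = 0 := by simp [binForm]
    simp [h00] at h1 h2
    exact ⟨h1, h2⟩
  · rintro ⟨h1, h2⟩ v hv
    obtain ⟨s, t, e0, e1, e2, e3⟩ := mem_lineOf_inl.1 hv
    rw [← e0, ← e1, ← e2, ← e3, binForm_smul, binForm_smul, h1, h2]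
    simp

theorem liesOn_lineOf_inr {d : ℕ} {A : ℂ × ℂ × ℂ × ℂ} :
    LiesOn (ramsPoly d) (lineOf (.inr A)) ↔ A ∈ selfMaps (d - 1) := by
  obtain ⟨a, b, c, e⟩ := A
  rw [liesOn_iff]
  constructor
  · intro h x y
    have := h ![x, y, a * x + b * y, c * x + e * y] (mem_lineOf_inr.2 (by simp))
    simp at this
    rw [add_comm]
    exact this
  · intro h v hv
    obtain ⟨e2, e3⟩ := mem_lineOf_inr.1 hv
    rw [e2, e3, add_comm]
    exact h _ _

/-- A line of the surface that meets `x = y = 0` is a join: if it contains `w = (0, 0, p, q)`, then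
the form restricted to the second coordinates is constant along translations by `(p, q)`, so by
`parallel_of_const` every point of the line has second coordinates proportional to `(p, q)`. A line
that does not meet `x = y = 0` projects isomorphically to the first coordinates, so it is a
graph. -/
theorem exists_lineOf {d : ℕ} (hd : 3 ≤ d) {W : Submodule ℂ (Fin 4 → ℂ)} (hW : IsLine W)
    (hS : LiesOn (ramsPoly d) W) : ∃ i, lineOf i = W := by
  have hS' := liesOn_iff.1 hS
  by_cases hker : ∃ w ∈ W, w ≠ 0 ∧ w 0 = 0 ∧ w 1 = 0
  · obtain ⟨w, hw, hw0, w0, w1⟩ := hker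
    have hpq : w 2 ≠ 0 ∨ w 3 ≠ 0 := by
      by_contra! hc
      exact hw0 (by ext i; fin_cases i <;> simp [w0, w1, hc.1, hc.2])
    have hz : binForm (d - 1) (w 2) (w 3) = 0 := by
      have := hS' w hw
      simpa [w0, w1, binForm] using this
    have hpar : ∀ v ∈ W, ∃ r : ℂ, v 2 = r * w 2 ∧ v 3 = r * w 3 := fun v hv => by
      have hv2 : v 2 * w 3 = v 3 * w 2 :=
        parallel_of_const (m := d - 1) (c := -binForm (d - 1) (v 0) (v 1)) (by omega) hpq hz
          fun r => by
            have := hS' (v + r • w) (W.add_mem hv (W.smul_mem r hw))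
            simp [w0, w1] at this
            linear_combination this
      by_cases h2 : w 2 = 0
      · have h3 : w 3 ≠ 0 := by tauto
        have : v 2 = 0 := by simpa [h2, h3] using hv2
        exact ⟨v 3 / w 3, by simp [this, h2], by field_simp⟩
      · exact ⟨v 2 / w 2, by field_simp, by field_simp; exact hv2.symm⟩
    obtain ⟨u, hu, hu'⟩ : ∃ u ∈ W, u 0 ≠ 0 ∨ u 1 ≠ 0 := by
      by_contra! hc
      have hle : W ≤ Submodule.span ℂ {w} := by
        intro v hv
        obtain ⟨v0, v1⟩ := hc v hv
        obtain ⟨r, h2, h3⟩ := hpar v hv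
        rw [Submodule.mem_span_singleton]
        exact ⟨r, by ext i; fin_cases i <;> simp [w0, w1, v0, v1, h2, h3]⟩
      have h1 := Submodule.finrank_mono hle
      rw [finrank_span_singleton hw0, hW] at h1
      omega
    obtain ⟨o, s, hs0, hs1⟩ := exists_pt hu'
    obtain ⟨o', t, ht0, ht1⟩ := exists_pt hpq
    have hw' : ![0, 0, (pt o').1, (pt o').2] ∈ W := by
      convert W.smul_mem t hw using 1
      ext i; fin_cases i <;> simp [w0, w1, ht0, ht1]
    obtain ⟨r, hr2, hr3⟩ := hpar u hu
    have hu'' : ![(pt o).1, (pt o).2, 0, 0] ∈ W := by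
      convert W.smul_mem s (W.sub_mem hu (W.smul_mem r hw)) using 1
      ext i; fin_cases i <;> simp [w0, w1, hs0, hs1, hr2, hr3]
    exact ⟨.inl (o, o'), hW.eq_span_pair hu'' hw' (linInd_prod o o')⟩
  · let π : W →ₗ[ℂ] ℂ × ℂ :=
      ((LinearMap.proj 0).prod (LinearMap.proj 1)).comp W.subtype
    have hinj : Function.Injective π := by
      rw [← LinearMap.ker_eq_bot, LinearMap.ker_eq_bot']
      rintro ⟨v, hv⟩ h
      by_contra hne
      simp [π] at h hne
      exact hker ⟨v, hv, hne, h.1, h.2⟩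
    have hsurj : Function.Surjective π :=
      (LinearMap.injective_iff_surjective_of_finrank_eq_finrank (by
        rw [show Module.finrank ℂ W = 2 from hW]; simp)).1 hinj
    obtain ⟨⟨u, hu⟩, hu'⟩ := hsurj (1, 0)
    obtain ⟨⟨v, hv⟩, hv'⟩ := hsurj (0, 1)
    simp [π] at hu' hv'
    have hu2 : ![1, 0, u 2, u 3] ∈ W := by
      convert hu using 1
      ext i; fin_cases i <;> simp [hu']
    have hv2 : ![0, 1, v 2, v 3] ∈ W := by
      convert hv using 1
      ext i; fin_cases i <;> simp [hv']
    exact ⟨.inr (u 2, v 2, u 3, v 3), hW.eq_span_pair hu2 hv2 (linInd_graph _ _ _ _)⟩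

theorem finite_selfMaps {m : ℕ} (hm : 4 ≤ m) : (selfMaps m).Finite := by
  apply Set.finite_of_ncard_ne_zero
  rcases eq_or_ne m 5 with rfl | h5
  · have := ncard_selfMaps_five
    omega
  · have h := ncard_selfMaps hm h5
    have : 4 ^ 2 ≤ m ^ 2 := Nat.pow_le_pow_left hm 2
    omega

/-- The joins of two zeros of the binary form contribute `d ^ 2` lines, and the remaining lines are
the graphs of the maps in `selfMaps`. -/
theorem card_lines_eq (d : ℕ) (hd : 5 ≤ d) :
    Nat.card {W : Submodule ℂ (Fin 4 → ℂ) // IsLine W ∧ LiesOn (ramsPoly d) W} =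
      d ^ 2 + (selfMaps (d - 1)).ncard := by
  have hset : {W : Submodule ℂ (Fin 4 → ℂ) | IsLine W ∧ LiesOn (ramsPoly d) W} =
      lineOf '' (Sum.inl '' (zeros (d - 1) ×ˢ zeros (d - 1)) ∪ Sum.inr '' selfMaps (d - 1)) := by
    ext W
    constructor
    · rintro ⟨hW, hS⟩
      obtain ⟨⟨o, o'⟩ | A, rfl⟩ := exists_lineOf (by omega) hW hS
      · exact Set.mem_image_of_mem _
          (Or.inl (Set.mem_image_of_mem _ (Set.mem_prod.2 (liesOn_lineOf_inl.1 hS))))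
      · exact Set.mem_image_of_mem _ (Or.inr (Set.mem_image_of_mem _ (liesOn_lineOf_inr.1 hS)))
    · rintro ⟨_, ⟨⟨o, o'⟩, h, rfl⟩ | ⟨A, h, rfl⟩, rfl⟩
      · exact ⟨isLine_lineOf _, liesOn_lineOf_inl.2 (Set.mem_prod.1 h)⟩
      · exact ⟨isLine_lineOf _, liesOn_lineOf_inr.2 h⟩
  have hz := ncard_zeros (d - 1) (by omega)
  have hzf : (zeros (d - 1)).Finite := Set.finite_of_ncard_ne_zero (by omega)
  have hmf := finite_selfMaps (m := d - 1) (by omega)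
  change Set.ncard {W : Submodule ℂ (Fin 4 → ℂ) | IsLine W ∧ LiesOn (ramsPoly d) W} = _
  rw [hset, Set.ncard_image_of_injective _ lineOf_injective,
    Set.ncard_union_eq (by simp [Set.disjoint_left]) ((hzf.prod hzf).image _) (hmf.image _),
    Set.ncard_image_of_injective _ Sum.inl_injective,
    Set.ncard_image_of_injective _ Sum.inr_injective, Set.ncard_prod, hz,
    Nat.sub_add_cancel (by omega), sq]

/-- For `d ≥ 5`, `d ≠ 6`, the surface `R_d : x^{d-1}y + xy^{d-1} + z^{d-1}t + zt^{d-1} = 0`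
contains exactly `3d² - 4d` lines, and for `d = 6` it contains exactly `180` lines. -/
theorem card_lines_rams (d : ℕ) (hd : 5 ≤ d) :
    (d ≠ 6 →
      Nat.card {W : Submodule ℂ (Fin 4 → ℂ) // IsLine W ∧ LiesOn (ramsPoly d) W} =
        3 * d ^ 2 - 4 * d) ∧
    (d = 6 →
      Nat.card {W : Submodule ℂ (Fin 4 → ℂ) // IsLine W ∧ LiesOn (ramsPoly d) W} = 180) := by
  rw [card_lines_eq d hd]
  constructor
  · intro h6
    rw [ncard_selfMaps (by omega) (by omega)]
    obtain ⟨k, rfl⟩ : ∃ k, d = k + 2 := ⟨d - 2, by omega⟩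
    have h1 : (k + 2 - 1) ^ 2 - 1 = k ^ 2 + 2 * k := by
      rw [Nat.add_sub_assoc (by norm_num)]
      exact Nat.sub_eq_of_eq_add (by ring)
    rw [h1]
    exact (Nat.sub_eq_of_eq_add (by ring)).symm
  · rintro rfl
    rw [ncard_selfMaps_five]
    norm_num
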